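/- Let (s_{m,n})_{m,n=0}^∞ be a positive semi-definite real sequence satisfying the Carleman-type condition ∑_{k=1}^∞ (s_{2m,2k} + s_{2m+2,2k})^{−1/(2k)} = ∞ for every m ∈ ℤ_+. Let H be the associated Hilbert space, 𝔏 the dense subspace of polynomial classes, A_{1,0}, A_{2,0} the multiplication operators by t_1, t_2 on 𝔏, and A_1, A_2 their closures. Then A_2 is self-adjoint, and the restriction of A_{2,0} to the linear manifold (A_{1,0} − iE_H)𝔏 is essentially self-adjoint in the Hilbert space H_1 = (A_1 − iE_H)D(A_1) (which is a closed subspace of H). -/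

import Mathlib

/-!
The proof is a commuting-variables version of Carleman's criterion: essential self-adjointness
is reduced to the vanishing of deficiency vectors, and these are killed one Krylov sequence at a
time.

Let `f₀, f₁, …` be vectors with `⟪f_{m+1}, f_n⟫ = ⟪f_m, f_{n+1}⟫` (the orbit of `f₀` under a
symmetric operator), and let `y` satisfy `⟪f_{n+1}, y⟫ = z ⟪f_n, y⟫` with `z` non-real. With `P_n`
the projection onto the span of `f₀, …, f_{n-1}`, put `h_n = ‖f_n - P_n f_n‖` and
`δ_n = ‖P_{n+1} y - P_n y‖`. A discrete Green formula (`wronskian_bound`) gives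
`|Im z| ‖P_{N+1} y‖² h_N ≤ h_{N+1} δ_N δ_{N+1}`. The `δ_n` are square-summable, so if `f₀` is not
orthogonal to `y` then `∑ h_N / h_{N+1}` converges. Carleman's inequality (`carleman_ineq`),
applied to these ratios, whose products telescope to `h₀ / h_n`, gives `∑ h_n ^ (-1/n) < ∞`, and
`h_n ≤ ‖f_n‖` then gives `∑ ‖f_n‖ ^ (-1/n) < ∞`. Divergence of that series therefore forces
`y ⟂ f_n` for all `n` (`defect_orth`). This avoids any orthogonal polynomial theory and any
assumption that the `f_n` are linearly independent.

In `H` one takes `f_n = t₁^m t₂^n`, with `‖f_n‖² = s_{2m,2n}`; in `H₁` one takes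
`f_n = (t₁ - i) t₁^m t₂^n`, with `‖f_n‖² = s_{2m,2n} + s_{2m+2,2n}` by symmetry of `A_{1,0}`. Both
are at most the quantity in the Carleman-type condition, and in both cases the vectors with
`m, n ≥ 0` span a dense subspace, so the deficiency spaces of multiplication by `t₂` vanish
(`model_defect`), which yields self-adjointness of the closure (`ess_selfAdjoint`). The space `H₁`
is closed because `x ↦ A₁ x - i x` is bounded below in the graph norm of the closed operator `A₁`
(`SymmRel.isClosed_map`).
-/

noncomputable section

open Complex Filter Topology Submodule Metric
open scoped InnerProductSpace ComplexOrder

/-- A closed isometric operator in a complex Hilbert space `H`: a linear isometry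
defined on a closed subspace `dom` of `H`. -/
structure ClosedIsometry (H : Type*) [NormedAddCommGroup H] [InnerProductSpace ℂ H]
    [CompleteSpace H] where
  dom : Submodule ℂ H
  dom_closed : IsClosed (dom : Set H)
  map : ↥dom →ₗᵢ[ℂ] H

namespace ClosedIsometry

variable {H : Type*} [NormedAddCommGroup H] [InnerProductSpace ℂ H] [CompleteSpace H]

/-- The defect subspace `N₀(V) = H ⊖ D(V)`. -/
def N0 (V : ClosedIsometry H) : Submodule ℂ H := V.domᗮ

/-- The defect subspace `N_∞(V) = H ⊖ R(V)`. -/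
def Ninf (V : ClosedIsometry H) : Submodule ℂ H := (LinearMap.range V.map.toLinearMap)ᗮ

/-- `V` has no nonzero fixed elements. -/
def NoFixed (V : ClosedIsometry H) : Prop := ∀ x : V.dom, V.map x = (x : H) → (x : H) = 0

instance (V : ClosedIsometry H) : CompleteSpace V.dom := V.dom_closed.completeSpace_coe

instance (V : ClosedIsometry H) : HasOrthogonalProjection V.N0 :=
  inferInstanceAs (HasOrthogonalProjection V.domᗮ)

/-- The operator `V ⊕ F` on the whole of `H`, where `F : N₀(V) → H`,
`(V ⊕ F)(v + n) = V v + F n` for `v ∈ D(V)`, `n ∈ N₀(V)`. -/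
def dsum (V : ClosedIsometry H) (F : ↥V.N0 →L[ℂ] H) : H →L[ℂ] H :=
  V.map.toContinuousLinearMap.comp (orthogonalProjection V.dom) +
    F.comp (orthogonalProjection V.N0)

end ClosedIsometry

/-- The continuous linear map underlying a unitary operator (linear isometric equivalence). -/
def uCLM {K : Type*} [NormedAddCommGroup K] [InnerProductSpace ℂ K] [CompleteSpace K]
    (U : K ≃ₗᵢ[ℂ] K) : K →L[ℂ] K :=
  U.toLinearIsometry.toContinuousLinearMap

/-- `U(z) = (E + zU)(E − zU)^{-1}` for a bounded operator `U`. -/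
def moebius {K : Type*} [NormedAddCommGroup K] [InnerProductSpace ℂ K] [CompleteSpace K]
    (z : ℂ) (W : K →L[ℂ] K) : K →L[ℂ] K :=
  (1 + z • W) * Ring.inverse (1 - z • W)

/-- A Hilbert space containing (an isometric copy of) `H`. -/
structure HilbertExt (H : Type*) [NormedAddCommGroup H] [InnerProductSpace ℂ H]
    [CompleteSpace H] where
  car : Type
  [ng : NormedAddCommGroup car]
  [ip : InnerProductSpace ℂ car]
  [cs : CompleteSpace car]
  emb : H →ₗᵢ[ℂ] car

attribute [instance] HilbertExt.ng HilbertExt.ip HilbertExt.cs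

/-- A self-adjoint operator in a Hilbert space `K`, encoded together with its resolvent
family: a densely defined symmetric operator such that `B − λ` is boundedly invertible
for every non-real `λ`. -/
structure SAOp (K : Type*) [NormedAddCommGroup K] [InnerProductSpace ℂ K]
    [CompleteSpace K] where
  op : K →ₗ.[ℂ] K
  dense_dom : Dense (op.domain : Set K)
  symm : ∀ x y : op.domain, ⟪op x, (y : K)⟫_ℂ = ⟪(x : K), op y⟫_ℂ
  res : ℂ → (K →L[ℂ] K)
  mem_res : ∀ (l : ℂ), l.im ≠ 0 → ∀ x : K, res l x ∈ op.domain
  res_right : ∀ (l : ℂ) (hl : l.im ≠ 0) (x : K),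
    op ⟨res l x, mem_res l hl x⟩ - l • res l x = x
  res_left : ∀ (l : ℂ) (_ : l.im ≠ 0) (x : op.domain), res l (op x - l • (x : K)) = (x : K)

/-- `(E + λB)(B − λE)^{-1} x` for a self-adjoint operator `B`. -/
def SAOp.cay {K : Type*} [NormedAddCommGroup K] [InnerProductSpace ℂ K] [CompleteSpace K]
    (B : SAOp K) {l : ℂ} (hl : l.im ≠ 0) (x : K) : K :=
  B.res l x + l • B.op ⟨B.res l x, B.mem_res l hl x⟩

/-- `B ⊇ A` along the isometric embedding `ι`. -/
def ExtendsAlong {H K : Type*} [NormedAddCommGroup H] [InnerProductSpace ℂ H] [CompleteSpace H]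
    [NormedAddCommGroup K] [InnerProductSpace ℂ K] [CompleteSpace K]
    (ι : H →ₗᵢ[ℂ] K) (A : H →ₗ.[ℂ] H) (B : K →ₗ.[ℂ] K) : Prop :=
  ∀ x : A.domain, ∃ hx : ι x ∈ B.domain, B ⟨ι x, hx⟩ = ι (A x)

/-- `R` is a generalized resolvent of the pair of symmetric operators `A₁, A₂`:
it is the compression to `H` of `(E+λ₁B₁)(B₁−λ₁)⁻¹(E+λ₂B₂)(B₂−λ₂)⁻¹` for some commuting
self-adjoint extensions `B₁ ⊇ A₁`, `B₂ ⊇ A₂` in a Hilbert space containing `H`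
(normalized by `0` at real points). -/
def IsGenResolventPair {H : Type*} [NormedAddCommGroup H] [InnerProductSpace ℂ H]
    [CompleteSpace H] (A₁ A₂ : H →ₗ.[ℂ] H) (R : ℂ → ℂ → (H →L[ℂ] H)) : Prop :=
  (∀ l₁ l₂ : ℂ, l₁.im = 0 ∨ l₂.im = 0 → R l₁ l₂ = 0) ∧
  ∃ (e : HilbertExt H) (B₁ B₂ : SAOp e.car),
    ExtendsAlong e.emb A₁ B₁.op ∧ ExtendsAlong e.emb A₂ B₂.op ∧
    (∀ l m : ℂ, l.im ≠ 0 → m.im ≠ 0 → B₁.res l * B₂.res m = B₂.res m * B₁.res l) ∧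
    ∀ (l₁ l₂ : ℂ) (h₁ : l₁.im ≠ 0) (h₂ : l₂.im ≠ 0) (x y : H),
      ⟪y, R l₁ l₂ x⟫_ℂ = ⟪e.emb y, B₁.cay h₁ (B₂.cay h₂ (e.emb x))⟫_ℂ

/-- `U` is a unitary extension of the closed isometric operator `V` along `ι`. -/
def ExtendsIso {H K : Type*} [NormedAddCommGroup H] [InnerProductSpace ℂ H] [CompleteSpace H]
    [NormedAddCommGroup K] [InnerProductSpace ℂ K] [CompleteSpace K]
    (ι : H →ₗᵢ[ℂ] K) (V : ClosedIsometry H) (U : K ≃ₗᵢ[ℂ] K) : Prop :=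
  ∀ x : V.dom, U (ι x) = ι (V.map x)

/-- `V = (A+i)(A−i)^{-1}` is the Cayley transform of the symmetric operator `A`,
equivalently `A = i(V+E)(V−E)^{-1}` (graph characterization). -/
def IsCayleyOf {H : Type*} [NormedAddCommGroup H] [InnerProductSpace ℂ H] [CompleteSpace H]
    (V : ClosedIsometry H) (A : H →ₗ.[ℂ] H) : Prop :=
  ∀ u w : H, (∃ hu : u ∈ V.dom, V.map ⟨u, hu⟩ = w) ↔
    ∃ x : A.domain, A x - Complex.I • (x : H) = u ∧ A x + Complex.I • (x : H) = w

/-- The Cayley transforms `V₁, V₂` commute whenever possible. -/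
def CommuteWherePossible {H : Type*} [NormedAddCommGroup H] [InnerProductSpace ℂ H]
    [CompleteSpace H] (V₁ V₂ : ClosedIsometry H) : Prop :=
  ∀ (h : H) (h₁ : h ∈ V₁.dom) (h₂ : h ∈ V₂.dom)
    (h₁₂ : V₂.map ⟨h, h₂⟩ ∈ V₁.dom) (h₂₁ : V₁.map ⟨h, h₁⟩ ∈ V₂.dom),
    V₁.map ⟨V₂.map ⟨h, h₂⟩, h₁₂⟩ = V₂.map ⟨V₁.map ⟨h, h₁⟩, h₂₁⟩

/-- The filter `λ → ∞` inside the sector `ℂ_+^ε = {λ : ε < arg λ < π − ε}`. -/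
def sectorFilter (ε : ℝ) : Filter ℂ :=
  Filter.comap (‖·‖) Filter.atTop ⊓ 𝓟 {l : ℂ | ε < l.arg ∧ l.arg < Real.pi - ε}

/-- The function `λ ↦ F(λ)` (defined on `ℂ₊`) with values in contractions from
`N₀(V) = N_i(A)` to `H` is admissible with respect to the symmetric operator `A`:
whenever `ψ ∈ N_i(A)`, `φ ∈ N_{−i}(A)` with `ψ − φ ∈ D(A)` (i.e. `X_i ψ = φ`),
`F(λ)ψ → φ` inside some sector and `|λ|(‖ψ‖ − ‖F(λ)ψ‖)` has finite lower limit there,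
it follows that `ψ = 0`. -/
def AdmissibleFor {H : Type*} [NormedAddCommGroup H] [InnerProductSpace ℂ H] [CompleteSpace H]
    (A : H →ₗ.[ℂ] H) (V : ClosedIsometry H)
    (F : ℂ → (↥V.N0 →L[ℂ] H)) : Prop :=
  ∀ (ψ : ↥V.N0) (φ : H), φ ∈ V.Ninf → (ψ : H) - φ ∈ A.domain →
    (∃ ε : ℝ, 0 < ε ∧ ε < Real.pi / 2 ∧
      Tendsto (fun l => F l ψ) (sectorFilter ε) (𝓝 φ) ∧
      ∃ C : ℝ, ∃ᶠ l in sectorFilter ε, ‖l‖ * (‖(ψ : H)‖ - ‖F l ψ‖) ≤ C) →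
    (ψ : H) = 0

/-- The class `S(𝔻; N₀(V), N_∞(V))`: analytic on the unit disc, contraction valued,
mapping `N₀(V)` into `N_∞(V)`. -/
def InClassS {H : Type*} [NormedAddCommGroup H] [InnerProductSpace ℂ H] [CompleteSpace H]
    (V : ClosedIsometry H) (Φ : ℂ → (↥V.N0 →L[ℂ] H)) : Prop :=
  DifferentiableOn ℂ Φ (Metric.ball 0 1) ∧
  (∀ z ∈ Metric.ball (0 : ℂ) 1, ‖Φ z‖ ≤ 1) ∧
  ∀ z ∈ Metric.ball (0 : ℂ) 1, ∀ n : ↥V.N0, Φ z n ∈ V.Ninf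

open MeasureTheory in
/-- A non-negative Borel measure `μ` on `ℝ²` is a solution of the moment problem with
moments `s`. -/
def IsMomentSolution (s : ℕ → ℕ → ℝ) (μ : MeasureTheory.Measure (ℝ × ℝ)) : Prop :=
  (∀ m n : ℕ, MeasureTheory.Integrable (fun t : ℝ × ℝ => t.1 ^ m * t.2 ^ n) μ) ∧
  ∀ m n : ℕ, ∫ t : ℝ × ℝ, t.1 ^ m * t.2 ^ n ∂μ = s m n

/-- The kernel `((1+λ₁t₁)(1+λ₂t₂))/((t₁−λ₁)(t₂−λ₂))`. -/
def momKernel (l₁ l₂ : ℂ) (t : ℝ × ℝ) : ℂ :=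
  ((1 + l₁ * (t.1 : ℂ)) * (1 + l₂ * (t.2 : ℂ))) /
    (((t.1 : ℂ) - l₁) * ((t.2 : ℂ) - l₂))

/-- The shift corresponding to multiplication by `t₁` on coefficient families. -/
def sh1 : ((ℕ × ℕ) →₀ ℂ) →ₗ[ℂ] ((ℕ × ℕ) →₀ ℂ) :=
  Finsupp.lmapDomain ℂ ℂ (fun p => (p.1 + 1, p.2))

/-- The shift corresponding to multiplication by `t₂` on coefficient families. -/
def sh2 : ((ℕ × ℕ) →₀ ℂ) →ₗ[ℂ] ((ℕ × ℕ) →₀ ℂ) :=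
  Finsupp.lmapDomain ℂ ℂ (fun p => (p.1, p.2 + 1))

/-- The Carleman-type condition (1.2). -/
def CarlemanCond (s : ℕ → ℕ → ℝ) : Prop :=
  ∀ m : ℕ, ¬ Summable (fun k : ℕ =>
    (s (2 * m) (2 * (k + 1)) + s (2 * m + 2) (2 * (k + 1))) ^
      (-(1 : ℝ) / (2 * ((k : ℝ) + 1))))

/-- Positive semi-definiteness of the two-dimensional moment sequence. -/
def IsPosSemidef (s : ℕ → ℕ → ℝ) : Prop :=
  ∀ α : (ℕ × ℕ) →₀ ℂ,
    0 ≤ ∑ p ∈ α.support, ∑ q ∈ α.support,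
      α p * (starRingEnd ℂ) (α q) * (s (p.1 + q.1) (p.2 + q.2) : ℂ)

end

open scoped InnerProductSpace

/-! ### Carleman's inequality -/

/-- Summation of the weighted means `∑_{k≤n} (k+1) a_k / ((n+1)(n+2))` after exchanging the order of
summation, using `1/((n+1)(n+2)) = 1/(n+1) - 1/(n+2)`. -/
theorem sum_weighted_telescope (a : ℕ → ℝ) (N : ℕ) :
    ∑ n ∈ Finset.range N, (∑ k ∈ Finset.range (n + 1), ((k : ℝ) + 1) * a k) /
        (((n : ℝ) + 1) * ((n : ℝ) + 2)) =
      ∑ k ∈ Finset.range N, a k -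
        (∑ k ∈ Finset.range N, ((k : ℝ) + 1) * a k) / ((N : ℝ) + 1) := by
  induction N with
  | zero => simp
  | succ N ih =>
    rw [Finset.sum_range_succ, ih, Finset.sum_range_succ _ N, Finset.sum_range_succ _ N]
    push_cast
    field_simp
    ring

/-- AM–GM applied to the numbers `(k+1) a_k`, combined with `(n+1)! ≥ ((n+1)/e)^(n+1)`. The factor
`2` replaces the denominator `(n+1)²` by the telescoping `(n+1)(n+2)`. -/
theorem geom_mean_le (a : ℕ → ℝ) (ha : ∀ n, 0 ≤ a n) (n : ℕ) :
    (∏ k ∈ Finset.range (n + 1), a k) ^ ((1 : ℝ) / ((n : ℝ) + 1)) ≤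
      2 * Real.exp 1 * ((∑ k ∈ Finset.range (n + 1), ((k : ℝ) + 1) * a k) /
        (((n : ℝ) + 1) * ((n : ℝ) + 2))) := by
  have hn : (0 : ℝ) < (n : ℝ) + 1 := by positivity
  have hS : 0 ≤ ∑ k ∈ Finset.range (n + 1), ((k : ℝ) + 1) * a k :=
    Finset.sum_nonneg fun k _ => mul_nonneg (by positivity) (ha k)
  have hP : 0 ≤ ∏ k ∈ Finset.range (n + 1), a k := Finset.prod_nonneg fun k _ => ha k
  have h1 := Real.geom_mean_le_arith_mean (Finset.range (n + 1)) (fun _ => (1 : ℝ))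
    (fun k => ((k : ℝ) + 1) * a k) (fun _ _ => zero_le_one) (by simp; positivity)
    (fun k _ => mul_nonneg (by positivity) (ha k))
  have hfac : ∏ k ∈ Finset.range (n + 1), ((k : ℝ) + 1) = ((n + 1).factorial : ℝ) := by
    rw [← Finset.prod_range_add_one_eq_factorial]; push_cast; rfl
  simp only [Real.rpow_one, one_mul, Finset.sum_const, Finset.card_range, nsmul_eq_mul, mul_one,
    Finset.prod_mul_distrib, hfac] at h1
  push_cast at h1
  rw [Real.mul_rpow (by positivity) hP] at h1
  have h2 := Real.pow_div_factorial_le_exp _ hn.le (n + 1)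
  have h3 : ((n : ℝ) + 1) / Real.exp 1 ≤ ((n + 1).factorial : ℝ) ^ ((n : ℝ) + 1)⁻¹ := by
    have : ((n : ℝ) + 1) / Real.exp 1 =
        (((n : ℝ) + 1) ^ (n + 1) / Real.exp ((n : ℝ) + 1)) ^ ((n : ℝ) + 1)⁻¹ := by
      have : ((n : ℝ) + 1) ^ (n + 1) / Real.exp ((n : ℝ) + 1) =
          (((n : ℝ) + 1) / Real.exp 1) ^ ((n : ℝ) + 1) := by
        rw [Real.div_rpow hn.le (Real.exp_pos _).le, ← Real.exp_mul, one_mul]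
        norm_cast
      rw [this, Real.rpow_rpow_inv (by positivity) hn.ne']
    rw [this]
    apply Real.rpow_le_rpow (by positivity) _ (by positivity)
    rw [div_le_iff₀ (by positivity)] at h2 ⊢
    linarith
  rw [one_div]
  set G := (∏ k ∈ Finset.range (n + 1), a k) ^ ((n : ℝ) + 1)⁻¹
  set S := ∑ k ∈ Finset.range (n + 1), ((k : ℝ) + 1) * a k
  have hG : 0 ≤ G := by positivity
  have h4 : ((n : ℝ) + 1) / Real.exp 1 * G ≤ S / ((n : ℝ) + 1) :=
    (mul_le_mul_of_nonneg_right h3 hG).trans h1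
  have he := Real.exp_pos 1
  rw [div_mul_eq_mul_div, div_le_div_iff₀ he hn] at h4
  rw [← mul_div_assoc, le_div_iff₀ (by positivity)]
  nlinarith [mul_nonneg hn.le hG, mul_nonneg hG (Nat.cast_nonneg n : (0:ℝ) ≤ n)]

/-- Carleman's inequality in qualitative form: the geometric means of a nonnegative summable
sequence are summable. -/
theorem carleman_ineq (a : ℕ → ℝ) (ha : ∀ n, 0 ≤ a n) (hs : Summable a) :
    Summable fun n : ℕ => (∏ k ∈ Finset.range (n + 1), a k) ^ ((1 : ℝ) / ((n : ℝ) + 1)) := by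
  refine Summable.of_nonneg_of_le
    (fun n => Real.rpow_nonneg (Finset.prod_nonneg fun k _ => ha k) _) (geom_mean_le a ha) ?_
  refine Summable.mul_left _ (summable_of_sum_range_le (c := ∑' n, a n) (fun n => ?_) fun N => ?_)
  · exact div_nonneg (Finset.sum_nonneg fun k _ => mul_nonneg (by positivity) (ha k))
      (by positivity)
  · rw [sum_weighted_telescope]
    have h1 : ∑ k ∈ Finset.range N, a k ≤ ∑' n, a n := hs.sum_le_tsum _ fun k _ => ha k
    have h2 : 0 ≤ (∑ k ∈ Finset.range N, ((k : ℝ) + 1) * a k) / ((N : ℝ) + 1) :=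
      div_nonneg (Finset.sum_nonneg fun k _ => mul_nonneg (by positivity) (ha k)) (by positivity)
    linarith

/-! ### Krylov subspaces and deficiency vectors -/

section Krylov
variable {H : Type*} [NormedAddCommGroup H] [InnerProductSpace ℂ H]

/-- The span of `f 0, …, f (n - 1)`. -/
def krylov (f : ℕ → H) (n : ℕ) : Submodule ℂ H :=
  Submodule.span ℂ (Set.range fun i : Fin n => f i)

instance (f : ℕ → H) (n : ℕ) : FiniteDimensional ℂ (krylov f n) :=
  FiniteDimensional.span_of_finite ℂ (Set.finite_range _)

theorem mem_krylov {f : ℕ → H} {n : ℕ} {x : H} :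
    x ∈ krylov f n ↔ ∃ c : ℕ → ℂ, x = ∑ k ∈ Finset.range n, c k • f k := by
  rw [krylov, Submodule.mem_span_range_iff_exists_fun]
  constructor
  · rintro ⟨c, rfl⟩
    refine ⟨fun k => if h : k < n then c ⟨k, h⟩ else 0, ?_⟩
    rw [Finset.sum_range]
    simp
  · rintro ⟨c, rfl⟩
    exact ⟨fun i => c i, by rw [Finset.sum_range]⟩

theorem krylov_mono (f : ℕ → H) {m n : ℕ} (h : m ≤ n) : krylov f m ≤ krylov f n := by
  apply Submodule.span_mono
  rintro _ ⟨i, rfl⟩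
  exact ⟨⟨i, i.2.trans_le h⟩, rfl⟩

theorem self_mem_krylov (f : ℕ → H) {m n : ℕ} (h : m < n) : f m ∈ krylov f n :=
  Submodule.subset_span ⟨⟨m, h⟩, rfl⟩

/-- The orthogonal projection onto `krylov f n`, as an operator on the whole space. -/
noncomputable abbrev kproj (f : ℕ → H) (n : ℕ) : H →L[ℂ] H := (krylov f n).starProjection

theorem kproj_pyth (f : ℕ → H) (y : H) (n : ℕ) :
    ‖kproj f (n + 1) y‖ ^ 2 =
      ‖kproj f n y‖ ^ 2 + ‖kproj f (n + 1) y - kproj f n y‖ ^ 2 := by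
  have h : kproj f n (kproj f (n + 1) y) = kproj f n y :=
    DFunLike.congr_fun (Submodule.starProjection_comp_starProjection_of_le
      (krylov_mono f n.le_succ)) y
  have := Submodule.norm_sq_eq_add_norm_sq_starProjection (kproj f (n + 1) y) (krylov f n)
  rw [this, h, Submodule.starProjection_orthogonal_val, h]

theorem kproj_mono (f : ℕ → H) (y : H) {m n : ℕ} (hmn : m ≤ n) :
    ‖kproj f m y‖ ^ 2 ≤ ‖kproj f n y‖ ^ 2 := by
  apply monotone_nat_of_le_succ (f := fun n => ‖kproj f n y‖ ^ 2) _ hmn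
  intro n
  rw [kproj_pyth f y n]
  nlinarith [sq_nonneg ‖kproj f (n + 1) y - kproj f n y‖]

theorem summable_kproj (f : ℕ → H) (y : H) :
    Summable fun n => ‖kproj f (n + 1) y - kproj f n y‖ ^ 2 := by
  refine summable_of_sum_range_le (c := ‖y‖ ^ 2) (fun n => sq_nonneg _) fun N => ?_
  have : ∑ n ∈ Finset.range N, ‖kproj f (n + 1) y - kproj f n y‖ ^ 2 =
      ‖kproj f N y‖ ^ 2 - ‖kproj f 0 y‖ ^ 2 := by
    rw [← Finset.sum_range_sub (fun n => ‖kproj f n y‖ ^ 2)]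
    exact Finset.sum_congr rfl fun n _ => by rw [kproj_pyth f y n]; ring
  rw [this]
  have h1 := Submodule.norm_starProjection_apply_le (krylov f N) y
  nlinarith [sq_nonneg ‖kproj f 0 y‖, norm_nonneg (kproj f N y), norm_nonneg y]

/-- A discrete Green formula: expand `P_{N+1} y = ∑ c_k f_k` and let `w = ∑ c_k f_{k+1}` be its
image under the shift. Symmetry makes `⟪w, P_{N+1} y⟫` real, while `⟪w, y⟫ = z ‖P_{N+1} y‖²`, so
`Im ⟪w, y - P_{N+1} y⟫ = Im z ‖P_{N+1} y‖²`; only the last term `c_N f_{N+1}` of `w` contributes to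
the left-hand side. The coefficient `c_N` is recovered from
`P_{N+1} y - P_N y = c_N (f_N - P_N f_N)`. -/
theorem wronskian_bound (f : ℕ → H) (hf : ∀ m n, ⟪f (m + 1), f n⟫_ℂ = ⟪f m, f (n + 1)⟫_ℂ)
    (y : H) (z : ℂ) (hy : ∀ n, ⟪f (n + 1), y⟫_ℂ = z * ⟪f n, y⟫_ℂ) (N : ℕ) :
    |z.im| * ‖kproj f (N + 1) y‖ ^ 2 * ‖f N - kproj f N (f N)‖ ≤
      ‖f (N + 1) - kproj f (N + 1) (f (N + 1))‖ *
        (‖kproj f (N + 1) y - kproj f N y‖ * ‖kproj f (N + 2) y - kproj f (N + 1) y‖) := by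
  obtain ⟨c, hc⟩ := mem_krylov.1 (Submodule.starProjection_apply_mem (krylov f (N + 1)) y)
  change kproj f (N + 1) y = _ at hc
  set P := kproj f (N + 1) y with hP
  set w := ∑ k ∈ Finset.range (N + 1), c k • f (k + 1) with hw
  have h1 : P - kproj f N y = c N • (f N - kproj f N (f N)) := by
    have h : kproj f N (kproj f (N + 1) y) = kproj f N y :=
      DFunLike.congr_fun (Submodule.starProjection_comp_starProjection_of_le
        (krylov_mono f N.le_succ)) y
    have hv : ∑ k ∈ Finset.range N, c k • f k ∈ krylov f N := mem_krylov.2 ⟨c, rfl⟩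
    rw [← h, ← hP, hc, Finset.sum_range_succ, map_add, map_smul,
      Submodule.starProjection_eq_self_iff.2 hv]
    module
  have hPy : ⟪P, y⟫_ℂ = ((‖P‖ ^ 2 : ℝ) : ℂ) := by
    have h0 : ⟪P, y - P⟫_ℂ = 0 := by
      rw [← inner_conj_symm, Submodule.starProjection_inner_eq_zero _ _
        (Submodule.starProjection_apply_mem _ _), map_zero]
    rw [inner_sub_right, sub_eq_zero] at h0
    rw [h0, inner_self_eq_norm_sq_to_K]; simp
  have h2 : ⟪w, y⟫_ℂ = z * ((‖P‖ ^ 2 : ℝ) : ℂ) := by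
    rw [← hPy, hc, hw, sum_inner, sum_inner, Finset.mul_sum]
    refine Finset.sum_congr rfl fun k _ => ?_
    rw [inner_smul_left, inner_smul_left, hy]; ring
  have h3 : (⟪w, P⟫_ℂ).im = 0 := by
    rw [← Complex.conj_eq_iff_im, inner_conj_symm, hc, hw]
    simp only [sum_inner, inner_sum, inner_smul_left, inner_smul_right, hf]
  have hu : f (N + 1) - kproj f (N + 1) (f (N + 1)) ∈ krylov f (N + 2) :=
    sub_mem (self_mem_krylov f (by lia)) (krylov_mono f (by lia)
      (Submodule.starProjection_apply_mem _ _))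
  have h4 : ⟪w, y - P⟫_ℂ = (starRingEnd ℂ) (c N) *
      ⟪f (N + 1) - kproj f (N + 1) (f (N + 1)), kproj f (N + 2) y - P⟫_ℂ := by
    have hort : ∀ v ∈ krylov f (N + 1), ⟪v, y - P⟫_ℂ = 0 := fun v hv => by
      rw [← inner_conj_symm, Submodule.starProjection_inner_eq_zero _ _ hv, map_zero]
    have hv : ∑ k ∈ Finset.range N, c k • f (k + 1) ∈ krylov f (N + 1) :=
      Submodule.sum_mem _ fun k hk => Submodule.smul_mem _ _ (self_mem_krylov f (by
        have := Finset.mem_range.1 hk; lia))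
    have e1 : ⟪f (N + 1) - kproj f (N + 1) (f (N + 1)), y - kproj f (N + 2) y⟫_ℂ = 0 := by
      rw [← inner_conj_symm, Submodule.starProjection_inner_eq_zero _ _ hu, map_zero]
    have e2 : kproj f (N + 2) y - P = (y - P) - (y - kproj f (N + 2) y) := by abel
    have e3 : ⟪f (N + 1) - kproj f (N + 1) (f (N + 1)), y - P⟫_ℂ = ⟪f (N + 1), y - P⟫_ℂ := by
      rw [inner_sub_left, hort _ (Submodule.starProjection_apply_mem _ _), sub_zero]
    rw [hw, Finset.sum_range_succ, inner_add_left, hort _ hv, zero_add, inner_smul_left, e2,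
      inner_sub_right _ (y - P), e1, sub_zero, e3]
  have h5 : |z.im| * ‖P‖ ^ 2 ≤ ‖c N‖ * (‖f (N + 1) - kproj f (N + 1) (f (N + 1))‖ *
      ‖kproj f (N + 2) y - P‖) := by
    have e : (⟪w, y - P⟫_ℂ).im = z.im * ‖P‖ ^ 2 := by
      rw [inner_sub_right, Complex.sub_im, h3, h2, Complex.im_mul_ofReal, sub_zero]
    calc |z.im| * ‖P‖ ^ 2 = |(⟪w, y - P⟫_ℂ).im| := by
          rw [e, abs_mul, abs_of_nonneg (sq_nonneg ‖P‖)]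
      _ ≤ ‖⟪w, y - P⟫_ℂ‖ := Complex.abs_im_le_norm _
      _ ≤ _ := by
          rw [h4, norm_mul, RCLike.norm_conj]
          gcongr
          exact norm_inner_le_norm _ _
  rw [h1, norm_smul]
  nlinarith [mul_le_mul_of_nonneg_right h5 (norm_nonneg (f N - kproj f N (f N)))]

/-- If the series `∑ ‖f_n‖ ^ (-1/n)` diverges, a deficiency vector `y` for the Krylov sequence `f` is
orthogonal to `f`. The divergence is stated through a minorant `c`, required to be a minorant only
where `f (n + 1) ≠ 0`, because `0 ^ (-1/n) = 0` in Mathlib instead of `∞`. -/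
theorem defect_orth (f : ℕ → H) (hf : ∀ m n, ⟪f (m + 1), f n⟫_ℂ = ⟪f m, f (n + 1)⟫_ℂ)
    (c : ℕ → ℝ) (hc0 : ∀ n, 0 ≤ c n)
    (hc : ∀ n, f (n + 1) ≠ 0 → c n ≤ ‖f (n + 1)‖ ^ (-(1 : ℝ) / ((n : ℝ) + 1)))
    (hdiv : ¬ Summable c)
    (y : H) (z : ℂ) (hz : z.im ≠ 0) (hy : ∀ n, ⟪f (n + 1), y⟫_ℂ = z * ⟪f n, y⟫_ℂ) (n : ℕ) :
    ⟪f n, y⟫_ℂ = 0 := by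
  suffices h : ⟪f 0, y⟫_ℂ = 0 by
    induction n with
    | zero => exact h
    | succ n ih => rw [hy, ih, mul_zero]
  by_contra h0
  apply hdiv
  set h : ℕ → ℝ := fun n => ‖f n - kproj f n (f n)‖ with hh
  set d : ℕ → ℝ := fun n => ‖kproj f (n + 1) y - kproj f n y‖ with hd
  set C : ℝ := |z.im| * ‖kproj f 1 y‖ ^ 2 with hC
  have hP1 : kproj f 1 y ≠ 0 := fun e => h0 (by
    have := (krylov f 1).starProjection_inner_eq_zero y (f 0) (self_mem_krylov f one_pos)
    change ⟪y - kproj f 1 y, f 0⟫_ℂ = 0 at this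
    rw [e, sub_zero] at this
    rw [← inner_conj_symm, this, map_zero])
  have hCpos : 0 < C := mul_pos (abs_pos.2 hz) (by positivity)
  have hstep : ∀ N, C * h N ≤ h (N + 1) * (d N * d (N + 1)) := fun N =>
    (mul_le_mul_of_nonneg_right (mul_le_mul_of_nonneg_left (kproj_mono f y (by lia))
      (abs_nonneg _)) (norm_nonneg _)).trans (wronskian_bound f hf y z hy N)
  -- No `f N` lies in the span of its predecessors: otherwise `hstep` would force `⟪f 0, y⟫ = 0`.
  have hpos : ∀ N, 0 < h N := by
    intro N
    induction N with
    | zero =>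
      have hbot : krylov f 0 = ⊥ := by simp [krylov]
      have : kproj f 0 (f 0) = 0 := by
        have hmem := Submodule.starProjection_apply_mem (krylov f 0) (f 0)
        exact (Submodule.mem_bot ℂ).1 (hbot.le hmem)
      simp only [hh, this, sub_zero, norm_pos_iff]
      rintro e
      exact h0 (by rw [e, inner_zero_left])
    | succ N ih =>
      refine (norm_nonneg _).lt_of_ne' fun e => ?_
      have e' : h (N + 1) = 0 := e
      have := hstep N
      rw [e', zero_mul] at this
      exact absurd this (not_le.2 (mul_pos hCpos ih))
  have hsum : Summable fun N => h N / h (N + 1) := by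
    have hd2 := summable_kproj f y
    have hd3 := (summable_nat_add_iff 1).2 hd2
    refine Summable.of_nonneg_of_le (fun N => (div_pos (hpos N) (hpos _)).le) (fun N => ?_)
      ((hd2.add hd3).mul_left (C⁻¹))
    rw [div_le_iff₀ (hpos _), ← mul_le_mul_iff_right₀ hCpos]
    have e : C * (C⁻¹ * (d N ^ 2 + d (N + 1) ^ 2) * h (N + 1)) =
      h (N + 1) * (d N ^ 2 + d (N + 1) ^ 2) := by field_simp
    refine (hstep N).trans (le_of_le_of_eq ?_ e.symm)
    refine mul_le_mul_of_nonneg_left ?_ (hpos _).le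
    nlinarith [sq_nonneg (d N - d (N + 1)), sq_nonneg (d N), sq_nonneg (d (N + 1))]
  have hcarl := carleman_ineq _ (fun N => (div_pos (hpos N) (hpos _)).le) hsum
  have hprod : ∀ n, ∏ k ∈ Finset.range n, h k / h (k + 1) = h 0 / h n := by
    intro n
    induction n with
    | zero => simp [(hpos 0).ne']
    | succ n ih =>
      rw [Finset.prod_range_succ, ih, div_mul_div_cancel₀ (hpos n).ne']
  simp only [hprod] at hcarl
  refine Summable.of_nonneg_of_le hc0 (fun n => ?_) (hcarl.mul_left (max 1 (h 0)⁻¹))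
  have hle : h (n + 1) ≤ ‖f (n + 1)‖ := by
    have := (krylov f (n + 1))ᗮ.norm_starProjection_apply_le (f (n + 1))
    rwa [Submodule.starProjection_orthogonal_val] at this
  have hn : (0 : ℝ) < (n : ℝ) + 1 := by positivity
  have hfne : f (n + 1) ≠ 0 := norm_pos_iff.1 ((hpos _).trans_le hle)
  have hh0 := hpos 0
  have hh1 := hpos (n + 1)
  calc c n ≤ ‖f (n + 1)‖ ^ (-(1 : ℝ) / ((n : ℝ) + 1)) := hc n hfne
    _ ≤ h (n + 1) ^ (-(1 : ℝ) / ((n : ℝ) + 1)) :=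
        Real.rpow_le_rpow_of_nonpos (hpos _) hle (by
          rw [neg_div]; exact neg_nonpos.2 (by positivity))
    _ = (h 0)⁻¹ ^ ((1 : ℝ) / ((n : ℝ) + 1)) * (h 0 / h (n + 1)) ^ ((1 : ℝ) / ((n : ℝ) + 1)) := by
        rw [← Real.mul_rpow (by positivity) (by positivity), neg_div, Real.rpow_neg hh1.le,
          ← Real.inv_rpow hh1.le]
        congr 1
        field_simp
    _ ≤ _ := by
        refine mul_le_mul_of_nonneg_right ?_ (by positivity)
        calc (h 0)⁻¹ ^ ((1 : ℝ) / ((n : ℝ) + 1))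
            ≤ (max 1 (h 0)⁻¹) ^ ((1 : ℝ) / ((n : ℝ) + 1)) :=
              Real.rpow_le_rpow (by positivity) (le_max_right _ _) (by positivity)
          _ ≤ (max 1 (h 0)⁻¹) ^ (1 : ℝ) :=
              Real.rpow_le_rpow_of_exponent_le (le_max_left _ _) (by
                rw [div_le_one hn]; linarith [(Nat.cast_nonneg n : (0 : ℝ) ≤ n)])
          _ = _ := Real.rpow_one _
end Krylov

/-! ### Symmetric relations and essential self-adjointness -/

section SA
variable {K : Type*} [NormedAddCommGroup K] [InnerProductSpace ℂ K]

/-- A linear relation `G ⊆ K × K` is symmetric: `⟪Ax, y⟫ = ⟪x, Ay⟫` when `G` is the graph of `A`.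
Working with relations lets the property pass to topological closures of graphs. -/
def SymmRel (G : Submodule ℂ (K × K)) : Prop :=
  ∀ p ∈ G, ∀ q ∈ G, ⟪p.2, q.1⟫_ℂ = ⟪p.1, q.2⟫_ℂ

theorem SymmRel.topClosure {G : Submodule ℂ (K × K)} (hG : SymmRel G) :
    SymmRel G.topologicalClosure := by
  intro p hp q hq
  have hcl : IsClosed {r : (K × K) × (K × K) | ⟪r.1.2, r.2.1⟫_ℂ = ⟪r.1.1, r.2.2⟫_ℂ} :=
    isClosed_eq (by fun_prop) (by fun_prop)
  have hsub : (G : Set (K × K)) ×ˢ (G : Set (K × K)) ⊆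
      {r : (K × K) × (K × K) | ⟪r.1.2, r.2.1⟫_ℂ = ⟪r.1.1, r.2.2⟫_ℂ} :=
    fun r hr => hG _ hr.1 _ hr.2
  have : (p, q) ∈ closure ((G : Set (K × K)) ×ˢ (G : Set (K × K))) := by
    rw [closure_prod_eq]
    exact ⟨hp, hq⟩
  exact closure_minimal hsub hcl this

theorem norm_sub_I_sq {a b : K} (h : ⟪b, a⟫_ℂ = ⟪a, b⟫_ℂ) :
    ‖b - Complex.I • a‖ ^ 2 = ‖b‖ ^ 2 + ‖a‖ ^ 2 := by
  have him : (⟪b, a⟫_ℂ).im = 0 := by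
    rw [← Complex.conj_eq_iff_im, inner_conj_symm, h]
  rw [norm_sub_sq (𝕜 := ℂ), inner_smul_right, norm_smul, Complex.norm_I]
  simp [him]

/-- The map `p ↦ p.2 - i p.1`; on the graph of `A` it is `(x, Ax) ↦ (A - i) x`. -/
noncomputable def subI : (K × K) →L[ℂ] K :=
  ContinuousLinearMap.snd ℂ K K - Complex.I • ContinuousLinearMap.fst ℂ K K

theorem subI_apply (p : K × K) : subI p = p.2 - Complex.I • p.1 := rfl

/-- The range of `A - i` is closed for a closed symmetric `A`, since
`‖Ax - ix‖² = ‖Ax‖² + ‖x‖²` bounds `A - i` below in the graph norm. -/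
theorem SymmRel.isClosed_map [CompleteSpace K] {G : Submodule ℂ (K × K)} (hG : SymmRel G)
    (hcl : IsClosed (G : Set (K × K))) :
    IsClosed (G.map (subI : (K × K) →L[ℂ] K).toLinearMap : Set K) := by
  have : CompleteSpace G := hcl.completeSpace_coe
  have hanti : AntilipschitzWith 1 (fun p : G => subI (p : K × K)) := by
    have := AddMonoidHomClass.antilipschitz_of_bound
      ((subI : (K × K) →L[ℂ] K).comp G.subtypeL) (K := 1) (fun p => ?_)
    · exact this
    have h := norm_sub_I_sq (hG p p.2 p p.2)
    rw [← subI_apply] at h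
    rw [NNReal.coe_one, one_mul]
    change max ‖(p : K × K).1‖ ‖(p : K × K).2‖ ≤ ‖subI (p : K × K)‖
    refine max_le ?_ ?_ <;> refine abs_le_of_sq_le_sq' ?_ (norm_nonneg _) |>.2 <;>
      nlinarith [sq_nonneg ‖(p : K × K).1‖, sq_nonneg ‖(p : K × K).2‖]
  have huc : UniformContinuous (fun p : G => subI (p : K × K)) :=
    ((subI : (K × K) →L[ℂ] K).comp G.subtypeL).uniformContinuous
  convert hanti.isClosed_range huc using 1
  ext x
  simp

theorem SymmRel.isClosable [CompleteSpace K] {T : K →ₗ.[ℂ] K} (hT : Dense (T.domain : Set K))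
    (hs : SymmRel T.graph) : T.IsClosable := by
  refine (LinearPMap.adjoint_isClosed hT).isClosable.leIsClosable
    (LinearPMap.IsFormalAdjoint.le_adjoint hT ?_)
  exact fun x y => hs _ (T.mem_graph x) _ (T.mem_graph y)

/-- A densely defined symmetric operator whose adjoint has no eigenvectors for `±i` is essentially
self-adjoint. The eigenvalue equations are written weakly, against the graph of `T`. The case `-i`
makes the range of `T̄ - i` everything, and the case `i` then places `dom T*` inside `dom T̄`. -/
theorem ess_selfAdjoint [CompleteSpace K] {T : K →ₗ.[ℂ] K} (hT : Dense (T.domain : Set K))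
    (hs : SymmRel T.graph)
    (hker : ∀ z : ℂ, z = Complex.I ∨ z = -Complex.I → ∀ y : K,
      (∀ p ∈ T.graph, ⟪p.2, y⟫_ℂ = z * ⟪p.1, y⟫_ℂ) → y = 0) :
    IsSelfAdjoint T.closure := by
  have hcl := hs.isClosable hT
  have hG := hcl.graph_closure_eq_closure_graph
  have hTG : T.graph ≤ T.closure.graph := hG ▸ T.graph.le_topologicalClosure
  have hsG : SymmRel T.closure.graph := hG ▸ hs.topClosure
  have hdc : Dense (T.closure.domain : Set K) := hT.mono T.le_closure.1
  have hclosed := hsG.isClosed_map hcl.closure_isClosed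
  have hsurj : T.closure.graph.map (subI : (K × K) →L[ℂ] K).toLinearMap = ⊤ := by
    have : CompleteSpace (T.closure.graph.map (subI : (K × K) →L[ℂ] K).toLinearMap) :=
      hclosed.completeSpace_coe
    rw [← Submodule.orthogonal_eq_bot_iff, Submodule.eq_bot_iff]
    intro y hy
    refine hker _ (Or.inr rfl) y fun p hp => ?_
    have := (Submodule.mem_orthogonal _ _).1 hy (subI p) ⟨p, hTG hp, rfl⟩
    rw [subI_apply, inner_sub_left, inner_smul_left, Complex.conj_I, sub_eq_zero] at this
    exact this
  rw [LinearPMap.isSelfAdjoint_def]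
  refine LinearPMap.eq_of_eq_graph ?_
  rw [LinearPMap.adjoint_graph_eq_graph_adjoint hdc]
  refine le_antisymm (fun x hx => ?_) fun x hx => ?_
  · rw [Submodule.mem_adjoint_iff] at hx
    -- Subtract from `x` an element `b` of the graph with the same image under `subI`; the
    -- difference then lies in the graph of the adjoint and is an eigenvector for `i`.
    obtain ⟨b, hb, hbx⟩ : subI x ∈ T.closure.graph.map (subI : (K × K) →L[ℂ] K).toLinearMap :=
      hsurj ▸ Submodule.mem_top
    replace hbx : subI b = subI x := hbx
    rw [subI_apply, subI_apply] at hbx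
    have hdiff : x.2 - b.2 = Complex.I • (x.1 - b.1) := by
      rw [smul_sub, sub_eq_sub_iff_sub_eq_sub, ← hbx]
    have h1 : x.1 - b.1 = 0 := by
      refine hker _ (Or.inl rfl) _ fun p hp => ?_
      have e1 := sub_eq_zero.1 (hx p.1 p.2 (hTG hp))
      have e2 := hsG p (hTG hp) b hb
      rw [inner_sub_right, e1, e2, ← inner_sub_right, hdiff, inner_smul_right]
    have h2 : x.2 - b.2 = 0 := by rw [hdiff, h1, smul_zero]
    rwa [show x = b from Prod.ext (sub_eq_zero.1 h1) (sub_eq_zero.1 h2)]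
  · rw [Submodule.mem_adjoint_iff]
    intro a b hab
    rw [hsG _ hab _ hx, sub_self]

/-- `ess_selfAdjoint` for an operator `T` given by a dense parametrisation `ψ : M → K`, as
`T (ψ a) = ψ (S a)`. -/
theorem ess_selfAdjoint_of_model [CompleteSpace K] {M : Type*} [AddCommGroup M] [Module ℂ M]
    (ψ : M →ₗ[ℂ] K) (S : M →ₗ[ℂ] M) (hψ : DenseRange ψ)
    (hS : ∀ a b, ⟪ψ (S a), ψ b⟫_ℂ = ⟪ψ a, ψ (S b)⟫_ℂ)
    (hker : ∀ z : ℂ, z = Complex.I ∨ z = -Complex.I → ∀ y : K,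
      (∀ a, ⟪ψ (S a), y⟫_ℂ = z * ⟪ψ a, y⟫_ℂ) → y = 0)
    (T : K →ₗ.[ℂ] K) (hT : ∀ u v : K, (u, v) ∈ T.graph ↔ ∃ a, u = ψ a ∧ v = ψ (S a)) :
    Dense (T.domain : Set K) ∧ SymmRel T.graph ∧ IsSelfAdjoint T.closure := by
  have hd : Dense (T.domain : Set K) := by
    refine Dense.mono ?_ hψ
    rintro _ ⟨a, rfl⟩
    exact LinearPMap.mem_domain_of_mem_graph ((hT _ _).2 ⟨a, rfl, rfl⟩)
  have hs : SymmRel T.graph := by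
    rintro ⟨_, _⟩ hp ⟨_, _⟩ hq
    obtain ⟨a, rfl, rfl⟩ := (hT _ _).1 hp
    obtain ⟨b, rfl, rfl⟩ := (hT _ _).1 hq
    exact hS a b
  exact ⟨hd, hs, ess_selfAdjoint hd hs fun z hz y hy =>
    hker z hz y fun a => hy (ψ a, ψ (S a)) ((hT _ _).2 ⟨a, rfl, rfl⟩)⟩

/-- The prescription `T (ψ a) = ψ (S a)` is well defined: if `ψ a = 0` then `ψ (S a)` is orthogonal
to the dense range of `ψ`, by symmetry. -/
theorem exists_model_op {M : Type*} [AddCommGroup M] [Module ℂ M]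
    (ψ : M →ₗ[ℂ] K) (S : M →ₗ[ℂ] M) (hψ : DenseRange ψ)
    (hS : ∀ a b, ⟪ψ (S a), ψ b⟫_ℂ = ⟪ψ a, ψ (S b)⟫_ℂ) :
    ∃ T : K →ₗ.[ℂ] K, ∀ u v : K, (u, v) ∈ T.graph ↔ ∃ a, u = ψ a ∧ v = ψ (S a) := by
  refine ⟨(LinearMap.range (ψ.prod (ψ ∘ₗ S))).toLinearPMap, fun u v => ?_⟩
  rw [Submodule.toLinearPMap_graph_eq]
  · simp [LinearMap.mem_range, Prod.ext_iff, eq_comm]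
  · rintro _ ⟨a, rfl⟩ h0
    change ψ a = 0 at h0
    change ψ (S a) = 0
    refine hψ.eq_zero_of_inner_left ℂ ?_
    intro b
    rw [hS, h0, inner_zero_left]
end SA

/-! ### The moment space -/

section Main
variable {H : Type*} [NormedAddCommGroup H] [InnerProductSpace ℂ H]

theorem sh1_single (m n : ℕ) (c : ℂ) :
    sh1 (Finsupp.single (m, n) c) = Finsupp.single (m + 1, n) c := by
  simp [sh1, Finsupp.lmapDomain_apply, Finsupp.mapDomain_single]

theorem sh2_single (m n : ℕ) (c : ℂ) :
    sh2 (Finsupp.single (m, n) c) = Finsupp.single (m, n + 1) c := by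
  simp [sh2, Finsupp.lmapDomain_apply, Finsupp.mapDomain_single]

theorem sh_comm (a : (ℕ × ℕ) →₀ ℂ) : sh1 (sh2 a) = sh2 (sh1 a) := by
  induction a using Finsupp.induction_linear with
  | zero => simp
  | add f g hf hg => rw [map_add, map_add, map_add, map_add, hf, hg]
  | single p c => obtain ⟨m, n⟩ := p; simp [sh1_single, sh2_single]

theorem inner_single (s : ℕ → ℕ → ℝ) (π : ((ℕ × ℕ) →₀ ℂ) →ₗ[ℂ] H)
    (hinner : ∀ α β : (ℕ × ℕ) →₀ ℂ,
      ⟪π α, π β⟫_ℂ = ∑ p ∈ α.support, ∑ q ∈ β.support,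
        (starRingEnd ℂ) (α p) * β q * (s (p.1 + q.1) (p.2 + q.2) : ℂ)) (p q : ℕ × ℕ) (c d : ℂ) :
    ⟪π (Finsupp.single p c), π (Finsupp.single q d)⟫_ℂ =
      (starRingEnd ℂ) c * d * (s (p.1 + q.1) (p.2 + q.2) : ℂ) := by
  have key : ⟪π (Finsupp.single p 1), π (Finsupp.single q 1)⟫_ℂ =
      (s (p.1 + q.1) (p.2 + q.2) : ℂ) := by
    rw [hinner, Finsupp.support_single _ one_ne_zero, Finsupp.support_single _ one_ne_zero]
    simp
  rw [← mul_one c, ← mul_one d, ← smul_eq_mul, ← smul_eq_mul, ← Finsupp.smul_single,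
    ← Finsupp.smul_single, map_smul, map_smul, inner_smul_left, inner_smul_right, key]
  simp [mul_assoc]

/-- Symmetry of a shift under the moment form need only be checked on monomials. -/
theorem inner_shift (π : ((ℕ × ℕ) →₀ ℂ) →ₗ[ℂ] H)
    (S : ((ℕ × ℕ) →₀ ℂ) →ₗ[ℂ] ((ℕ × ℕ) →₀ ℂ))
    (h : ∀ p q c d, ⟪π (S (Finsupp.single p c)), π (Finsupp.single q d)⟫_ℂ =
      ⟪π (Finsupp.single p c), π (S (Finsupp.single q d))⟫_ℂ) (a b : (ℕ × ℕ) →₀ ℂ) :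
    ⟪π (S a), π b⟫_ℂ = ⟪π a, π (S b)⟫_ℂ := by
  induction a using Finsupp.induction_linear with
  | zero => simp
  | add f g hf hg => simp only [map_add, inner_add_left, hf, hg]
  | single p c =>
    induction b using Finsupp.induction_linear with
    | zero => simp
    | add f g hf hg => simp only [map_add, inner_add_right, hf, hg]
    | single q d => exact h p q c d

/-- The exponent `-1/(2(k+1))` of the Carleman-type condition, on squared norms, is `-1/(k+1)` on
norms. -/
theorem rpow_sq_carleman {x : ℝ} (hx : 0 ≤ x) (k : ℕ) :
    (x ^ 2) ^ (-(1 : ℝ) / (2 * ((k : ℝ) + 1))) = x ^ (-(1 : ℝ) / ((k : ℝ) + 1)) := by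
  rw [← Real.rpow_natCast x 2, ← Real.rpow_mul hx]
  congr 1
  have : (0 : ℝ) < (k : ℝ) + 1 := by positivity
  push_cast
  field_simp

/-- Vanishing of the deficiency spaces of multiplication by `t₂`, for any realisation `φ` of the
polynomials in which this multiplication is symmetric and the monomials have squared norm at most
the quantity in the Carleman-type condition. It serves both `H`, with `φ = π`, and `H₁`, with
`φ a = (t₁ - i) a`. -/
theorem model_defect {K : Type*} [NormedAddCommGroup K] [InnerProductSpace ℂ K]
    (φ : ((ℕ × ℕ) →₀ ℂ) →ₗ[ℂ] K) (hφ : DenseRange φ)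
    (hS : ∀ a b, ⟪φ (sh2 a), φ b⟫_ℂ = ⟪φ a, φ (sh2 b)⟫_ℂ)
    (s : ℕ → ℕ → ℝ) (hcar : CarlemanCond s)
    (hpos : ∀ m n, 0 ≤ s (2 * m) (2 * (n + 1)) + s (2 * m + 2) (2 * (n + 1)))
    (hnorm : ∀ m n, ‖φ (Finsupp.single (m, n) 1)‖ ^ 2 ≤ s (2 * m) (2 * n) + s (2 * m + 2) (2 * n))
    (z : ℂ) (hz : z = Complex.I ∨ z = -Complex.I) (y : K)
    (hy : ∀ a, ⟪φ (sh2 a), y⟫_ℂ = z * ⟪φ a, y⟫_ℂ) : y = 0 := by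
  have hsingle : ∀ m n, ⟪φ (Finsupp.single (m, n) 1), y⟫_ℂ = 0 := by
    intro m n
    refine defect_orth (fun n => φ (Finsupp.single (m, n) 1)) (fun a b => ?_) _
      (fun k => Real.rpow_nonneg (hpos m k) _) (fun k hk => ?_) (hcar m) y z ?_ (fun k => ?_) n
    · have := hS (Finsupp.single (m, a) 1) (Finsupp.single (m, b) 1)
      rwa [sh2_single, sh2_single] at this
    · rw [← rpow_sq_carleman (norm_nonneg _)]
      refine Real.rpow_le_rpow_of_nonpos (by have := norm_pos_iff.2 hk; positivity) (hnorm m _) ?_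
      rw [neg_div]
      exact neg_nonpos.2 (by positivity)
    · rcases hz with rfl | rfl <;> simp
    · have := hy (Finsupp.single (m, k) 1)
      rwa [sh2_single] at this
  refine hφ.eq_zero_of_inner_right ℂ fun a => ?_
  induction a using Finsupp.induction_linear with
  | zero => simp
  | add f g hf hg => rw [map_add, inner_add_left, hf, hg, add_zero]
  | single p c =>
    rw [← mul_one c, ← smul_eq_mul, ← Finsupp.smul_single, map_smul, inner_smul_left,
      hsingle p.1 p.2, mul_zero]

end Main

noncomputable section

open Complex
open scoped InnerProductSpace

/-- Let `(s_{m,n})` be a positive semi-definite real sequence satisfying the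
Carleman-type condition, `H` the associated Hilbert space, `A_{1,0}, A_{2,0}` the
multiplication operators by `t₁, t₂` on the polynomial classes and `A₁, A₂` their closures.
Then `A₂` is self-adjoint, and the restriction of `A_{2,0}` to `(A_{1,0} − iE)𝔏` is
essentially self-adjoint in the Hilbert space `H₁ = (A₁ − iE)D(A₁)` (a closed subspace). -/
theorem statement13 {H : Type*} [NormedAddCommGroup H] [InnerProductSpace ℂ H]
    [CompleteSpace H]
    (s : ℕ → ℕ → ℝ) (hpsd : IsPosSemidef s) (hcar : CarlemanCond s)
    (π : ((ℕ × ℕ) →₀ ℂ) →ₗ[ℂ] H)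
    (hinner : ∀ α β : (ℕ × ℕ) →₀ ℂ,
      ⟪π α, π β⟫_ℂ = ∑ p ∈ α.support, ∑ q ∈ β.support,
        (starRingEnd ℂ) (α p) * β q * (s (p.1 + q.1) (p.2 + q.2) : ℂ))
    (hdense : DenseRange π)
    (A10 A20 : H →ₗ.[ℂ] H)
    (hA10dom : A10.domain = LinearMap.range π)
    (hA20dom : A20.domain = LinearMap.range π)
    (hA10 : ∀ (α : (ℕ × ℕ) →₀ ℂ) (hα : π α ∈ A10.domain), A10 ⟨π α, hα⟩ = π (sh1 α))
    (hA20 : ∀ (α : (ℕ × ℕ) →₀ ℂ) (hα : π α ∈ A20.domain), A20 ⟨π α, hα⟩ = π (sh2 α)) :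
    letI A1c := A10.closure
    letI A2c := A20.closure
    letI fA : ↥A1c.domain →ₗ[ℂ] H := A1c.toFun - Complex.I • A1c.domain.subtype
    letI K₁ : Submodule ℂ H := LinearMap.range fA
    (Dense (A2c.domain : Set H) ∧ IsSelfAdjoint A2c) ∧
    ∃ hcl : IsClosed (K₁ : Set H),
      letI : CompleteSpace ↥K₁ := hcl.completeSpace_coe
      ∃ T : ↥K₁ →ₗ.[ℂ] ↥K₁,
        (∀ u v : ↥K₁, (u, v) ∈ T.graph ↔
          ∃ α : (ℕ × ℕ) →₀ ℂ,
            (u : H) = π (sh1 α) - Complex.I • π α ∧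
            (v : H) = π (sh1 (sh2 α)) - Complex.I • π (sh2 α)) ∧
        Dense (T.domain : Set ↥K₁) ∧
        IsSelfAdjoint T.closure := by
  have hS1 : ∀ a b, ⟪π (sh1 a), π b⟫_ℂ = ⟪π a, π (sh1 b)⟫_ℂ := by
    refine inner_shift π sh1 fun p q c d => ?_
    rw [sh1_single, sh1_single, inner_single s π hinner, inner_single s π hinner]
    simp only [Nat.add_right_comm, Nat.add_assoc]
  have hS2 : ∀ a b, ⟪π (sh2 a), π b⟫_ℂ = ⟪π a, π (sh2 b)⟫_ℂ := by
    refine inner_shift π sh2 fun p q c d => ?_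
    rw [sh2_single, sh2_single, inner_single s π hinner, inner_single s π hinner]
    simp only [Nat.add_right_comm, Nat.add_assoc]
  have hnorm : ∀ m n, ‖π (Finsupp.single (m, n) 1)‖ ^ 2 = s (2 * m) (2 * n) := by
    intro m n
    have h := inner_single s π hinner (m, n) (m, n) 1 1
    rw [inner_self_eq_norm_sq_to_K] at h
    simp only [map_one, one_mul, ← two_mul] at h
    have h' : ((‖π (Finsupp.single (m, n) 1)‖ ^ 2 : ℝ) : ℂ) = (s (2 * m) (2 * n) : ℂ) := by
      rw [← h]; push_cast; rfl
    exact Complex.ofReal_injective h'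
  have hs0 : ∀ m n, 0 ≤ s (2 * m) (2 * n) := fun m n => hnorm m n ▸ sq_nonneg _
  have hs0' : ∀ m n, 0 ≤ s (2 * m + 2) (2 * n) := fun m n => hs0 (m + 1) n
  have hgraph : ∀ (A : H →ₗ.[ℂ] H) (S : ((ℕ × ℕ) →₀ ℂ) →ₗ[ℂ] ((ℕ × ℕ) →₀ ℂ)),
      A.domain = LinearMap.range π →
      (∀ (α : (ℕ × ℕ) →₀ ℂ) (hα : π α ∈ A.domain), A ⟨π α, hα⟩ = π (S α)) →
      ∀ u v : H, (u, v) ∈ A.graph ↔ ∃ a, u = π a ∧ v = π (S a) := by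
    intro A S hdom hA u v
    rw [LinearPMap.mem_graph_iff]
    constructor
    · rintro ⟨⟨x, hx⟩, hxu, hxv⟩
      obtain ⟨a, rfl⟩ := hdom ▸ hx
      exact ⟨a, hxu.symm, hxv.symm.trans (hA a hx)⟩
    · rintro ⟨a, rfl, rfl⟩
      have hx : π a ∈ A.domain := hdom ▸ ⟨a, rfl⟩
      exact ⟨⟨π a, hx⟩, rfl, hA a hx⟩
  have h2 := ess_selfAdjoint_of_model π sh2 hdense hS2
    (model_defect π hdense hS2 s hcar (fun m n => add_nonneg (hs0 m _) (hs0' m _))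
      (fun m n => by rw [hnorm]; linarith [hs0' m n])) A20 (hgraph A20 sh2 hA20dom hA20)
  refine ⟨⟨h2.1.mono A20.le_closure.1, h2.2.2⟩, ?_⟩
  have hg1 := hgraph A10 sh1 hA10dom hA10
  have hd1 : Dense (A10.domain : Set H) := by
    rw [hA10dom, LinearMap.coe_range]
    exact hdense
  have hs1 : SymmRel A10.graph := by
    rintro ⟨_, _⟩ hp ⟨_, _⟩ hq
    obtain ⟨a, rfl, rfl⟩ := (hg1 _ _).1 hp
    obtain ⟨b, rfl, rfl⟩ := (hg1 _ _).1 hq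
    exact hS1 a b
  have hcl1 := hs1.isClosable hd1
  have hG1 := hcl1.graph_closure_eq_closure_graph
  set K₁ : Submodule ℂ H :=
    LinearMap.range (A10.closure.toFun - Complex.I • A10.closure.domain.subtype) with hK₁
  have hKmap : K₁ = A10.closure.graph.map (subI : (H × H) →L[ℂ] H).toLinearMap := by
    ext x
    rw [hK₁]
    constructor
    · rintro ⟨v, rfl⟩
      exact ⟨_, A10.closure.mem_graph v, rfl⟩
    · rintro ⟨p, hp, rfl⟩
      obtain ⟨v, h1, h2⟩ := (LinearPMap.mem_graph_iff _).1 hp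
      refine ⟨v, ?_⟩
      change A10.closure v - Complex.I • (v : H) = p.2 - Complex.I • p.1
      rw [h1, h2]
  have hclosed : IsClosed (K₁ : Set H) := by
    rw [hKmap]
    exact (hG1 ▸ hs1.topClosure : SymmRel A10.closure.graph).isClosed_map hcl1.closure_isClosed
  have hmemG : ∀ a, (π a, π (sh1 a)) ∈ A10.graph := fun a => (hg1 _ _).2 ⟨a, rfl, rfl⟩
  have hmem : ∀ a, π (sh1 a) - Complex.I • π a ∈ K₁ := fun a => by
    rw [hKmap]
    exact ⟨(π a, π (sh1 a)), LinearPMap.le_graph_of_le A10.le_closure (hmemG a), rfl⟩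
  -- The polynomial classes multiplied by `t₁ - i`, viewed in `K₁`.
  let φ : ((ℕ × ℕ) →₀ ℂ) →ₗ[ℂ] K₁ := (π ∘ₗ sh1 - Complex.I • π).codRestrict K₁ hmem
  have hφ : ∀ a, (φ a : H) = π (sh1 a) - Complex.I • π a := fun a => rfl
  have hφ' : ∀ a, (φ a : H) = π (sh1 a - Complex.I • a) := fun a => by
    rw [hφ, map_sub, map_smul]
  have hφd : DenseRange φ := by
    rw [DenseRange, Subtype.dense_iff]
    intro x hx
    obtain ⟨p, hp, rfl⟩ := hKmap.le hx
    have hp' : p ∈ closure (A10.graph : Set (H × H)) := by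
      have := hG1.ge hp
      exact this
    have := image_closure_subset_closure_image (subI : (H × H) →L[ℂ] H).continuous ⟨p, hp', rfl⟩
    refine closure_mono ?_ this
    rintro _ ⟨⟨u, v⟩, hq, rfl⟩
    obtain ⟨a, rfl, rfl⟩ := (hg1 _ _).1 hq
    exact ⟨φ a, ⟨a, rfl⟩, rfl⟩
  have hφS : ∀ a b, ⟪φ (sh2 a), φ b⟫_ℂ = ⟪φ a, φ (sh2 b)⟫_ℂ := fun a b => by
    rw [Submodule.coe_inner, Submodule.coe_inner, hφ', hφ', hφ', hφ', sh_comm, sh_comm,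
      ← map_smul, ← map_smul, ← map_sub, ← map_sub]
    exact hS2 _ _
  have hφn : ∀ m n, ‖φ (Finsupp.single (m, n) 1)‖ ^ 2 ≤
      s (2 * m) (2 * n) + s (2 * m + 2) (2 * n) := fun m n => by
    rw [Submodule.coe_norm, hφ, norm_sub_I_sq (hS1 _ _), sh1_single, hnorm, hnorm, mul_add,
      mul_one, add_comm]
  have : CompleteSpace K₁ := hclosed.completeSpace_coe
  obtain ⟨T, hT⟩ := exists_model_op φ sh2 hφd hφS
  have h3 := ess_selfAdjoint_of_model φ sh2 hφd hφS
    (model_defect φ hφd hφS s hcar (fun m n => add_nonneg (hs0 m _) (hs0' m _)) hφn) T hT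
  refine ⟨hclosed, T, fun u v => ?_, h3.1, h3.2.2⟩
  rw [hT]
  simp only [Subtype.ext_iff, hφ]

end
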